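/- Let f : ℝ² → ℝ be of class C² satisfying (i) D²f(p)(q,q) > 0 for all p, q ∈ ℝ² with q ≠ 0, and (ii) there is a constant Λ > 0 with |D²f(p)| ≤ Λ/(1+|p|) for all p ∈ ℝ². Let ρ : [1,∞) → (0,∞) be of class C¹ with ρ'(t) > 0 and (d/dt)[ρ(t)/√t] ≤ 0 for all t ≥ 1. Let u ∈ C²(ℝ²) be an entire solution of div[Df(∇u)] = 0 such that Γ₁^{−1/2} · ρ²(Γ₁)/ρ'(Γ₁) ≤ c · Γ₂^{1/2} holds on ℝ² with some finite constant c, where Γ_i := 1 + |∂_i u|² for i = 1, 2. Then u is an affine function. -/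

import Mathlib

open Real MeasureTheory Metric
open scoped ENNReal

noncomputable section

/-- `ℝ²` with its Euclidean structure. -/
abbrev E2 : Type := EuclideanSpace ℝ (Fin 2)

/-- The `i`-th standard basis vector of `ℝ²`. -/
def ee (i : Fin 2) : E2 := EuclideanSpace.single i 1

/-- The Hessian bilinear form `D²f(p)(q,q)`. -/
def Hess (f : E2 → ℝ) (p q : E2) : ℝ := iteratedFDeriv ℝ 2 f p ![q, q]

/-- The partial derivative `∂ᵢu(x)`. -/
def pd (u : E2 → ℝ) (i : Fin 2) (x : E2) : ℝ := fderiv ℝ u x (ee i)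

/-- The equation `div [Df(∇u)] = 0`, i.e. `∑ i, ∂ᵢ[(∂f/∂pᵢ)(∇u(x))] = 0` on `ℝ²`. -/
def solves (f u : E2 → ℝ) : Prop :=
  ∀ x : E2, ∑ i : Fin 2, fderiv ℝ (fun y => fderiv ℝ f (gradient u y) (ee i)) x (ee i) = 0

/-- Differentiation under the integral sign along translations of a `C¹` function. -/
theorem hasDerivAt_integral_translate_mul {V ψ : E2 → ℝ} (hV : ContDiff ℝ 1 V)
    (hψ : Continuous ψ) (hψc : HasCompactSupport ψ) (e : E2) :
    HasDerivAt (fun h : ℝ => ∫ x, V (x + h • e) * ψ x) (∫ x, fderiv ℝ V x e * ψ x) 0 := by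
  have hV0 : Continuous V := hV.continuous
  have hV1 : Continuous (fderiv ℝ V) := hV.continuous_fderiv one_ne_zero
  have hcont : Continuous fun p : E2 × ℝ => fderiv ℝ V (p.1 + p.2 • e) e * ψ p.1 := by fun_prop
  obtain ⟨C, hC⟩ := (hψc.isCompact.prod
    (isCompact_Icc (a := (-1 : ℝ)) (b := 1))).exists_bound_of_continuousOn hcont.continuousOn
  have key := hasDerivAt_integral_of_dominated_loc_of_deriv_le (μ := (volume : Measure E2))
    (F := fun h x => V (x + h • e) * ψ x)
    (F' := fun h x => fderiv ℝ V (x + h • e) e * ψ x) (x₀ := (0 : ℝ)) (s := Set.Icc (-1) 1)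
    (bound := (tsupport ψ).indicator fun _ => C)
    (Icc_mem_nhds (by norm_num) (by norm_num)) ?_ ?_ ?_ ?_ ?_ ?_
  · simpa using key.2
  · refine .of_forall fun h => Continuous.aestronglyMeasurable ?_
    fun_prop
  · refine Continuous.integrable_of_hasCompactSupport (by fun_prop) hψc.mul_left
  · refine Continuous.aestronglyMeasurable ?_
    fun_prop
  · refine .of_forall fun x h hh => ?_
    by_cases hx : x ∈ tsupport ψ
    · rw [Set.indicator_of_mem hx]
      exact hC (x, h) ⟨hx, hh⟩
    · rw [Set.indicator_of_notMem hx, image_eq_zero_of_notMem_tsupport hx]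
      simp
  · exact (integrable_indicator_iff (isClosed_tsupport ψ).measurableSet).2
      (integrableOn_const hψc.isCompact.measure_lt_top.ne)
  · refine .of_forall fun x h _ => HasDerivAt.mul_const ?_ _
    have h1 : HasDerivAt (fun h : ℝ => x + h • e) e h := by
      simpa using ((hasDerivAt_id h).smul_const e).const_add x
    exact ((hV.differentiable one_ne_zero _).hasFDerivAt).comp_hasDerivAt h h1

/-- A divergence-free `C¹` vector field `V` has divergence-free partial derivatives in the
distributional sense. -/
theorem integral_sum_fderiv_mul_fderiv_eq_zero {V : Fin 2 → E2 → ℝ} {φ : E2 → ℝ}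
    (hV : ∀ i, ContDiff ℝ 1 (V i)) (hdiv : ∀ x, ∑ i, fderiv ℝ (V i) x (ee i) = 0)
    (hφ : ContDiff ℝ 1 φ) (hφc : HasCompactSupport φ) (e : E2) :
    ∫ x, ∑ i, fderiv ℝ (V i) x e * fderiv ℝ φ x (ee i) = 0 := by
  have hφ0 : Continuous φ := hφ.continuous
  have hφ1 : Continuous (fderiv ℝ φ) := hφ.continuous_fderiv one_ne_zero
  have hV0 (i) : Continuous (V i) := (hV i).continuous
  have hV1 (i) : Continuous (fderiv ℝ (V i)) := (hV i).continuous_fderiv one_ne_zero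
  have hψ (i : Fin 2) : Continuous fun x => fderiv ℝ φ x (ee i) := by fun_prop
  have hψc (i : Fin 2) : HasCompactSupport fun x => fderiv ℝ φ x (ee i) :=
    hφc.fderiv_apply ℝ (ee i)
  have hzero : ∀ h : ℝ, ∑ i, ∫ x, V i (x + h • e) * fderiv ℝ φ x (ee i) = 0 := by
    intro h
    have hW (i) : ContDiff ℝ 1 fun x => V i (x + h • e) :=
      (hV i).comp (contDiff_id.add contDiff_const)
    have hparts (i) : ∫ x, V i (x + h • e) * fderiv ℝ φ x (ee i)
        = - ∫ x, fderiv ℝ (V i) (x + h • e) (ee i) * φ x := by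
      have := integral_mul_fderiv_eq_neg_fderiv_mul_of_integrable (μ := (volume : Measure E2))
        (f := fun x => V i (x + h • e)) (g := φ) (v := ee i) ?_ ?_ ?_
        (fun x _ => (hW i).differentiable one_ne_zero x)
        (fun x _ => hφ.differentiable one_ne_zero x)
      · simpa only [fderiv_comp_add_right] using this
      · simp only [fderiv_comp_add_right]
        exact Continuous.integrable_of_hasCompactSupport (by fun_prop) hφc.mul_left
      · exact Continuous.integrable_of_hasCompactSupport (by fun_prop) (hψc i).mul_left
      · exact Continuous.integrable_of_hasCompactSupport (by fun_prop) hφc.mul_left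
    simp_rw [hparts, Finset.sum_neg_distrib]
    rw [← integral_finsetSum]
    · simp_rw [← Finset.sum_mul, hdiv]
      simp
    · exact fun i _ => Continuous.integrable_of_hasCompactSupport (by fun_prop) hφc.mul_left
  have hd := HasDerivAt.fun_sum (u := Finset.univ) fun i _ =>
    hasDerivAt_integral_translate_mul (hV i) (hψ i) (hψc i) e
  simp_rw [hzero] at hd
  rw [integral_finsetSum]
  · exact hd.unique (hasDerivAt_const _ _)
  · exact fun i _ => Continuous.integrable_of_hasCompactSupport (by fun_prop) (hψc i).mul_left

/-- Two-dimensional Liouville argument: a continuous nonnegative density satisfying a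
Caccioppoli-type identity against every cut-off function vanishes. -/
theorem eq_zero_of_caccioppoli {Q : E2 → ℝ} (hQ : Continuous Q) (hQ0 : ∀ x, 0 ≤ Q x) {K : ℝ} (hK : 0 ≤ K)
    (h : ∀ η : E2 → ℝ, ContDiff ℝ 1 η → HasCompactSupport η → ∃ T : E2 → ℝ, Continuous T ∧
      ∫ x, (η x ^ 2 * Q x + T x) = 0 ∧
      ∀ x, T x ^ 2 ≤ 4 * K * (η x ^ 2 * Q x) * ‖fderiv ℝ η x‖ ^ 2) :
    ∀ x, Q x = 0 := by
  let θ : ContDiffBump (0 : E2) := ⟨1, 2, by norm_num, by norm_num⟩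
  have hθ : ContDiff ℝ 1 θ := θ.contDiff
  set D : ℝ := ∫ x, ‖fderiv ℝ θ x‖ ^ 2 with hD
  let η : ℕ → E2 → ℝ := fun n x => θ (((n : ℝ) + 1)⁻¹ • x)
  have hn (n : ℕ) : (0 : ℝ) < n + 1 := by positivity
  have hη (n) : ContDiff ℝ 1 (η n) := hθ.comp (contDiff_const_smul _)
  have hηc (n) : HasCompactSupport (η n) :=
    θ.hasCompactSupport.comp_smul (inv_ne_zero (hn n).ne')
  have hη0 (n x) : 0 ≤ η n x := θ.nonneg
  have hη1 (n x) : η n x ≤ 1 := θ.le_one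
  have hηball (n : ℕ) (x) (hx : x ∈ ball (0 : E2) (n + 1)) : η n x = 1 := by
    apply θ.one_of_mem_closedBall
    rw [mem_closedBall_zero_iff, norm_smul, norm_inv, Real.norm_of_nonneg (hn n).le]
    rw [mem_ball_zero_iff] at hx
    change _ ≤ (1 : ℝ)
    rw [inv_mul_le_iff₀ (hn n)]
    linarith
  have hdball (n : ℕ) (x) (hx : x ∈ ball (0 : E2) (n + 1)) : fderiv ℝ (η n) x = 0 := by
    have : η n =ᶠ[nhds x] fun _ => 1 := by
      filter_upwards [isOpen_ball.mem_nhds hx] with y hy using hηball n y hy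
    rw [this.fderiv_eq, fderiv_const_apply]
  have hDη (n) : ∫ x, ‖fderiv ℝ (η n) x‖ ^ 2 = D := by
    have h1 : ∀ x, ‖fderiv ℝ (η n) x‖ ^ 2 =
        (((n : ℝ) + 1)⁻¹) ^ 2 * ‖fderiv ℝ θ (((n : ℝ) + 1)⁻¹ • x)‖ ^ 2 := by
      intro x
      have := fderiv_comp_smul (f := (θ : E2 → ℝ)) (x := x) (((n : ℝ) + 1)⁻¹)
      change ‖fderiv ℝ (fun x => θ (((n : ℝ) + 1)⁻¹ • x)) x‖ ^ 2 = _
      rw [this, norm_smul, mul_pow, Real.norm_eq_abs, sq_abs]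
    simp_rw [h1]
    rw [integral_const_mul, Measure.integral_comp_inv_smul_of_nonneg volume
      (fun y => ‖fderiv ℝ θ y‖ ^ 2) (hn n).le]
    have := (hn n).ne'
    simp [finrank_euclideanSpace, hD]
    field_simp
  have hdc (n) : Continuous (fderiv ℝ (η n)) := (hη n).continuous_fderiv one_ne_zero
  have hηcont (n) : Continuous (η n) := (hη n).continuous
  have hint1 (n) : Integrable fun x => η n x ^ 2 * Q x :=
    Continuous.integrable_of_hasCompactSupport (by fun_prop)
      (((hηc n).comp_left (g := fun t : ℝ => t ^ 2) (by simp)).mul_right)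
  have hint2 (n) : Integrable fun x => ‖fderiv ℝ (η n) x‖ ^ 2 :=
    Continuous.integrable_of_hasCompactSupport (by fun_prop)
      (((hηc n).fderiv ℝ).comp_left (g := fun t => ‖t‖ ^ 2) (by simp))
  choose T hTc hT hTQ using fun n => h (η n) (hη n) (hηc n)
  have hTint (n) : Integrable (T n) := by
    refine Continuous.integrable_of_hasCompactSupport (hTc n) ((hηc n).mono fun x hx => ?_)
    contrapose! hx
    have h1 := hTQ n x
    rw [Function.notMem_support] at hx ⊢
    rw [hx] at h1
    nlinarith [sq_nonneg (T n x)]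
  have hTeq (n) : ∫ x, η n x ^ 2 * Q x = ∫ x, - T n x := by
    have := hT n
    rw [integral_add (hint1 n) (hTint n)] at this
    rw [integral_neg]
    linarith
  have young (n x) {l : ℝ} (hl : 0 < l) :
      - T n x ≤ l * (η n x ^ 2 * Q x) + K / l * ‖fderiv ℝ (η n) x‖ ^ 2 := by
    have hA : 0 ≤ η n x ^ 2 * Q x := mul_nonneg (sq_nonneg _) (hQ0 x)
    have hB : 0 ≤ K / l * ‖fderiv ℝ (η n) x‖ ^ 2 := by positivity
    refine neg_le.1 (neg_le_of_abs_le (abs_le_of_sq_le_sq ((hTQ n x).trans ?_) (by positivity)))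
    calc 4 * K * (η n x ^ 2 * Q x) * ‖fderiv ℝ (η n) x‖ ^ 2
        = 4 * (l * (η n x ^ 2 * Q x)) * (K / l * ‖fderiv ℝ (η n) x‖ ^ 2) := by field_simp
      _ ≤ _ := four_mul_le_sq_add _ _
  have hball (n : ℕ) : ∫ x in ball (0 : E2) (n + 1), Q x ≤ ∫ x, η n x ^ 2 * Q x := by
    rw [← integral_indicator measurableSet_ball]
    refine integral_mono ((hQ.locallyIntegrable.integrableOn_isCompact
      (isCompact_closedBall (0 : E2) (n + 1))).mono_set ball_subset_closedBall
      |>.integrable_indicator measurableSet_ball) (hint1 n) fun x => ?_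
    by_cases hx : x ∈ ball (0 : E2) (n + 1)
    · simp [hx, hηball n x hx]
    · simpa only [Set.indicator_of_notMem hx] using mul_nonneg (sq_nonneg _) (hQ0 x)
  have hcover : AECover (volume : Measure E2) Filter.atTop
      fun n : ℕ => ball (0 : E2) ((n : ℝ) + 1) :=
    aecover_ball (Filter.tendsto_atTop_add_const_right _ _ tendsto_natCast_atTop_atTop)
  have hQint : Integrable Q := by
    refine hcover.integrable_of_integral_bounded_of_nonneg_ae (4 * K * D) (fun n => ?_)
      (.of_forall hQ0) (.of_forall fun n => ?_)
    · exact (hQ.locallyIntegrable.integrableOn_isCompact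
        (isCompact_closedBall (0 : E2) (n + 1))).mono_set ball_subset_closedBall
    · have h1 := integral_mono (hTint n).neg
        (((hint1 n).const_mul (1 / 2)).add ((hint2 n).const_mul (K / (1 / 2))))
        fun x => young n x (l := 1 / 2) (by norm_num)
      simp only [Pi.neg_apply, Pi.add_apply] at h1
      rw [← hTeq, integral_add ((hint1 n).const_mul _) ((hint2 n).const_mul _),
        integral_const_mul, integral_const_mul, hDη] at h1
      linarith [hball n]
  have hlim := hcover.integral_tendsto_of_countably_generated hQint
  have hle (l : ℝ) (hl : 0 < l) : ∫ x, Q x ≤ K * D / l := by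
    have hstep (n : ℕ) : ∫ x in ball (0 : E2) (n + 1), Q x
        ≤ l * ((∫ x, Q x) - ∫ x in ball (0 : E2) (n + 1), Q x) + K * D / l := by
      refine (hball n).trans ?_
      have hi := hQint.indicator (measurableSet_ball (x := (0 : E2)) (ε := n + 1)).compl
      have h1 := integral_mono (hTint n).neg
        ((hi.const_mul l).add ((hint2 n).const_mul (K / l))) fun x => ?_
      · simp only [Pi.neg_apply, Pi.add_apply] at h1
        rw [← hTeq, integral_add (hi.const_mul _) ((hint2 n).const_mul _),
          integral_const_mul, integral_const_mul, hDη,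
          integral_indicator measurableSet_ball.compl] at h1
        have h2 := integral_add_compl (measurableSet_ball (x := (0 : E2)) (ε := n + 1)) hQint
        rw [show (∫ x, Q x) - ∫ x in ball (0 : E2) (n + 1), Q x
          = ∫ x in (ball (0 : E2) (n + 1))ᶜ, Q x by linarith]
        rwa [mul_div_right_comm]
      · by_cases hx : x ∈ ball (0 : E2) (n + 1)
        · have h3 := hTQ n x
          have h4 : T n x = 0 := by
            rw [hdball n x hx] at h3
            simp at h3
            nlinarith
          simp [hx, h4, hdball n x hx]
        · have h3 := young n x hl
          have h4 : η n x ^ 2 * Q x ≤ Q x :=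
            mul_le_of_le_one_left (hQ0 x) (pow_le_one₀ (hη0 n x) (hη1 n x))
          simp only [Pi.neg_apply, Pi.add_apply]
          rw [Set.indicator_of_mem (show x ∈ (ball (0 : E2) (n + 1))ᶜ from hx)]
          nlinarith
    have := le_of_tendsto_of_tendsto' hlim
      (((tendsto_const_nhds.sub hlim).const_mul l).add_const (K * D / l)) hstep
    simpa using this
  have hI : ∫ x, Q x ≤ 0 := by
    have hdiv : Filter.Tendsto (fun l : ℝ => K * D / l) Filter.atTop (nhds 0) :=
      tendsto_const_nhds.div_atTop Filter.tendsto_id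
    refine ge_of_tendsto hdiv ?_
    filter_upwards [Filter.eventually_gt_atTop 0] with l hl using hle l hl
  have hae : Q =ᵐ[volume] 0 :=
    (integral_eq_zero_iff_of_nonneg hQ0 hQint).1 (hI.antisymm (integral_nonneg hQ0))
  exact fun x => congrFun ((hQ.ae_eq_iff_eq volume continuous_const).1 hae) x

/-- Cauchy–Schwarz inequality for a symmetric positive semidefinite bilinear form. -/
theorem sq_apply_le_mul_of_nonneg {B : E2 →L[ℝ] E2 →L[ℝ] ℝ} (hsymm : ∀ a b, B a b = B b a)
    (hB : ∀ a, 0 ≤ B a a) (a b : E2) : B a b ^ 2 ≤ B a a * B b b := by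
  have h : ∀ t : ℝ, 0 ≤ B b b * (t * t) + 2 * B a b * t + B a a := by
    intro t
    have := hB (a + t • b)
    simp only [map_add, map_smul, add_apply, smul_apply, smul_eq_mul,
      hsymm b a] at this
    linarith
  have := discrim_le_zero h
  rw [discrim] at this
  linarith

/-- The test function profile `g(t) = ρ(1+t²) t / √(1+t²)`. -/
theorem exists_profile {ρ : ℝ → ℝ} (hρC1 : ContDiffOn ℝ 1 ρ (Set.Ici 1))
    (hρpos : ∀ t : ℝ, 1 ≤ t → 0 < ρ t)
    (hρ' : ∀ t : ℝ, 1 ≤ t → 0 < derivWithin ρ (Set.Ici 1) t) :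
    ∃ g : ℝ → ℝ, ContDiff ℝ 1 g ∧ (∀ t, 0 < deriv g t) ∧
      ∀ t, g t ^ 2 ≤ (1 + t ^ 2) ^ (-(1:ℝ)/2) * (ρ (1 + t ^ 2)) ^ 2 /
          derivWithin ρ (Set.Ici 1) (1 + t ^ 2) * deriv g t := by
  have hmem (t : ℝ) : (1 : ℝ) ≤ 1 + t ^ 2 := by nlinarith [sq_nonneg t]
  have hpos (t : ℝ) : 0 < 1 + t ^ 2 := by positivity
  have hsq (t : ℝ) : √(1 + t ^ 2) ^ 2 = 1 + t ^ 2 := Real.sq_sqrt (hpos t).le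
  have hs (t : ℝ) : 0 < √(1 + t ^ 2) := Real.sqrt_pos.2 (hpos t)
  have hderiv (t : ℝ) : HasDerivAt (fun t => ρ (1 + t ^ 2) * (t / √(1 + t ^ 2)))
      (derivWithin ρ (Set.Ici 1) (1 + t ^ 2) * (2 * t ^ 2 / √(1 + t ^ 2))
        + ρ (1 + t ^ 2) / √(1 + t ^ 2) ^ 3) t := by
    have h1 : HasDerivAt (fun t : ℝ => 1 + t ^ 2) (2 * t) t := by
      simpa using (hasDerivAt_pow 2 t).const_add 1
    have h2 : HasDerivAt (fun t => ρ (1 + t ^ 2))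
        (derivWithin ρ (Set.Ici 1) (1 + t ^ 2) * (2 * t)) t :=
      ((hρC1.differentiableOn one_ne_zero) _ (hmem t)).hasDerivWithinAt.comp_hasDerivAt t h1
        (.of_forall hmem)
    have h3 := (hasDerivAt_id t).div (h1.sqrt (hpos t).ne') (hs t).ne'
    convert! h2.mul h3 using 1
    have := (hs t).ne'
    simp only [id, Pi.div_apply]
    field_simp
    linear_combination (-ρ (1 + t ^ 2)) * hsq t
  have hd (t : ℝ) := (hderiv t).deriv
  refine ⟨fun t => ρ (1 + t ^ 2) * (t / √(1 + t ^ 2)), ?_, fun t => ?_, fun t => ?_⟩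
  · have h1 : ContDiff ℝ 1 fun t : ℝ => ρ (1 + t ^ 2) :=
      contDiffOn_univ.1 (hρC1.comp (g := ρ) (f := fun t : ℝ => 1 + t ^ 2)
        (by fun_prop) fun t _ => hmem t)
    refine h1.mul (contDiff_id.div ?_ fun t => (hs t).ne')
    exact ContDiff.sqrt (by fun_prop) fun t => (hpos t).ne'
  · rw [hd]
    have := hρpos _ (hmem t)
    have := hρ' _ (hmem t)
    have := hs t
    positivity
  · rw [hd, neg_div, Real.rpow_neg (hpos t).le, ← Real.sqrt_eq_rpow]
    have h1 := hρpos _ (hmem t)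
    have h2 := hρ' _ (hmem t)
    have h3 := hs t
    set r := ρ (1 + t ^ 2)
    set d := derivWithin ρ (Set.Ici 1) (1 + t ^ 2)
    set s := √(1 + t ^ 2)
    have h4 : s⁻¹ * r ^ 2 / d * (d * (2 * t ^ 2 / s) + r / s ^ 3)
        = (r * (t / s)) ^ 2 + ((r * (t / s)) ^ 2 + r ^ 3 / (d * s ^ 4)) := by
      field_simp
      ring
    rw [h4]
    have : 0 ≤ r ^ 3 / (d * s ^ 4) := by positivity
    nlinarith [sq_nonneg (r * (t / s))]

theorem sum_smul_ee (v : E2) : ∑ i, v i • ee i = v := by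
  ext j
  fin_cases j <;> simp [ee]

theorem sum_mul_inner_ee (L : E2 →L[ℝ] ℝ) (v : E2) :
    ∑ i, L (ee i) * inner ℝ v (ee i) = L v := by
  conv_rhs => rw [← sum_smul_ee v]
  simp [ee, EuclideanSpace.inner_single_right, mul_comm]

theorem contDiff_gradient {u : E2 → ℝ} (hu : ContDiff ℝ 2 u) : ContDiff ℝ 1 (gradient u) :=
  (InnerProductSpace.toDual ℝ E2).symm.contDiff.comp (hu.fderiv_right (m := 1) (by norm_num))

theorem inner_fderiv_gradient {u : E2 → ℝ} (hu : ContDiff ℝ 2 u) (x a b : E2) :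
    inner ℝ (fderiv ℝ (gradient u) x a) b = fderiv ℝ (fun y => fderiv ℝ u y b) x a := by
  have hG := (contDiff_gradient hu).differentiable one_ne_zero x
  have h1 : (fun y => fderiv ℝ u y b) = fun y => inner ℝ (gradient u y) b :=
    funext fun y => (inner_gradient_left ..).symm
  rw [h1, fderiv_inner_apply ℝ hG (differentiableAt_const b)]
  simp

theorem inner_fderiv_gradient_comm {u : E2 → ℝ} (hu : ContDiff ℝ 2 u) (x a b : E2) :
    inner ℝ (fderiv ℝ (gradient u) x a) b = inner ℝ (fderiv ℝ (gradient u) x b) a := by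
  have hd : DifferentiableAt ℝ (fderiv ℝ u) x :=
    (hu.fderiv_right (m := 1) (by norm_num)).differentiable one_ne_zero x
  have happ (a b : E2) : fderiv ℝ (fun y => fderiv ℝ u y b) x a
      = fderiv ℝ (fderiv ℝ u) x a b := by
    rw [fderiv_clm_apply hd (differentiableAt_const b)]
    simp
  rw [inner_fderiv_gradient hu, inner_fderiv_gradient hu, happ, happ]
  exact hu.contDiffAt.isSymmSndFDerivAt (by simp) a b

/-- A `C²` function on the plane with vanishing second derivatives is affine. -/
theorem exists_affine_of_fderiv_gradient_eq_zero {u : E2 → ℝ} (hu : ContDiff ℝ 2 u)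
    (h : ∀ x, fderiv ℝ (gradient u) x = 0) :
    ∃ a b c : ℝ, ∀ x : E2, u x = a * x 0 + b * x 1 + c := by
  have hconst := is_const_of_fderiv_eq_zero ((contDiff_gradient hu).differentiable one_ne_zero) h
  set L := fderiv ℝ u 0 with hL
  have hfd (x : E2) : fderiv ℝ u x = L := by
    rw [← toDual_gradient, hconst x 0, toDual_gradient]
  have hdiff : Differentiable ℝ u := hu.differentiable two_ne_zero
  have hsub := is_const_of_fderiv_eq_zero (f := fun x => u x - L x)
    (hdiff.sub L.differentiable) fun x => by
      rw [fderiv_fun_sub (hdiff x) L.differentiableAt, hfd, L.fderiv, sub_self]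
  refine ⟨L (ee 0), L (ee 1), u 0, fun x => ?_⟩
  have h1 := hsub x 0
  have h2 := sum_mul_inner_ee L x
  simp [ee, EuclideanSpace.inner_single_right] at h1 h2 ⊢
  linarith

/-- An entire solution has vanishing second derivatives as soon as some strictly increasing `C¹`
function `g` satisfies `g² ≤ c (1 + |∇u|) g'` along `∂₀u`: test the differentiated equation with
`η² g(∂₀u)`. -/
theorem fderiv_gradient_eq_zero_of_profile {f u : E2 → ℝ} (hf : ContDiff ℝ 2 f)
    (hpos : ∀ p q : E2, q ≠ 0 → 0 < Hess f p q) {Lam : ℝ} (hLam : 0 < Lam)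
    (hgrow : ∀ p : E2, ‖iteratedFDeriv ℝ 2 f p‖ ≤ Lam / (1 + ‖p‖))
    (hu : ContDiff ℝ 2 u) (heq : solves f u) {g : ℝ → ℝ} (hg : ContDiff ℝ 1 g)
    (hg' : ∀ t, 0 < deriv g t) {c : ℝ} (hc : 0 ≤ c)
    (hcond : ∀ x, g (pd u 0 x) ^ 2 ≤ c * (1 + ‖gradient u x‖) * deriv g (pd u 0 x)) (x : E2) :
    fderiv ℝ (gradient u) x = 0 := by
  set G := gradient u with hGdef
  have hG : ContDiff ℝ 1 G := contDiff_gradient hu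
  have hGd : Differentiable ℝ G := hG.differentiable one_ne_zero
  have hf1 : ContDiff ℝ 1 (fderiv ℝ f) := hf.fderiv_right (by norm_num)
  set B : E2 → E2 →L[ℝ] E2 →L[ℝ] ℝ := fun x => fderiv ℝ (fderiv ℝ f) (G x) with hBdef
  have hBHess (x q : E2) : B x q q = Hess f (G x) q := by
    simp [Hess, iteratedFDeriv_two_apply, hBdef]
  have hBpos (x q : E2) (hq : q ≠ 0) : 0 < B x q q := hBHess x q ▸ hpos _ _ hq
  have hBnonneg (x q : E2) : 0 ≤ B x q q := by
    rcases eq_or_ne q 0 with rfl | hq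
    · simp
    · exact (hBpos x q hq).le
  have hBsymm (x a b : E2) : B x a b = B x b a :=
    hf.contDiffAt.isSymmSndFDerivAt (by simp) a b
  have hBle (x q : E2) : B x q q ≤ Lam / (1 + ‖G x‖) * ‖q‖ ^ 2 := by
    rw [hBHess]
    refine (le_abs_self _).trans (((iteratedFDeriv ℝ 2 f (G x)).le_opNorm ![q, q]).trans ?_)
    simp only [Fin.prod_univ_two, Matrix.cons_val_zero, Matrix.cons_val_one]
    rw [← sq]
    exact mul_le_mul_of_nonneg_right (hgrow _) (sq_nonneg _)
  have hBc : Continuous B := (hf1.continuous_fderiv one_ne_zero).comp hG.continuous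
  set W : E2 → E2 := fun x => fderiv ℝ G x (ee 0) with hWdef
  have hWc : Continuous W := (hG.continuous_fderiv one_ne_zero).clm_apply continuous_const
  have hV (i : Fin 2) : ContDiff ℝ 1 fun y => fderiv ℝ f (G y) (ee i) :=
    (hf1.comp hG).clm_apply contDiff_const
  have hVd (i : Fin 2) (x a : E2) :
      fderiv ℝ (fun y => fderiv ℝ f (G y) (ee i)) x a = B x (fderiv ℝ G x a) (ee i) := by
    have hc : HasFDerivAt (fun y => fderiv ℝ f (G y)) ((B x).comp (fderiv ℝ G x)) x :=
      (hf1.differentiable one_ne_zero (G x)).hasFDerivAt.comp x (hGd x).hasFDerivAt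
    rw [fderiv_clm_apply hc.differentiableAt (differentiableAt_const _), hc.fderiv]
    simp
  have hw : ContDiff ℝ 1 (pd u 0) :=
    (hu.fderiv_right (m := 1) (by norm_num)).clm_apply contDiff_const
  have hwd (x a : E2) : fderiv ℝ (pd u 0) x a = inner ℝ (W x) a := by
    rw [hWdef, hGdef, inner_fderiv_gradient_comm hu, inner_fderiv_gradient hu]
    rfl
  have hgc : Continuous (deriv g) := hg.continuous_deriv le_rfl
  have hQ0 : ∀ x, deriv g (pd u 0 x) * B x (W x) (W x) = 0 := by
    refine eq_zero_of_caccioppoli (K := c * Lam) ?_ (fun x => ?_) (by positivity) ?_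
    · exact (hgc.comp hw.continuous).mul ((hBc.clm_apply hWc).clm_apply hWc)
    · exact mul_nonneg (hg' _).le (hBnonneg _ _)
    intro η hη hηc
    have hN : Continuous (gradient η) :=
      (InnerProductSpace.toDual ℝ E2).symm.continuous.comp (hη.continuous_fderiv one_ne_zero)
    refine ⟨fun x => 2 * η x * g (pd u 0 x) * B x (W x) (gradient η x), ?_, ?_, fun x => ?_⟩
    · exact ((continuous_const.mul hη.continuous).mul (hg.continuous.comp hw.continuous)).mul
        ((hBc.clm_apply hWc).clm_apply hN)
    · have hφ : ContDiff ℝ 1 fun x => η x ^ 2 * g (pd u 0 x) := (hη.pow 2).mul (hg.comp hw)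
      have hφc : HasCompactSupport fun x => η x ^ 2 * g (pd u 0 x) :=
        (hηc.comp_left (g := fun t : ℝ => t ^ 2) (by simp)).mul_right
      have hφd (x a : E2) : fderiv ℝ (fun x => η x ^ 2 * g (pd u 0 x)) x a
          = inner ℝ ((2 * η x * g (pd u 0 x)) • gradient η x
            + (η x ^ 2 * deriv g (pd u 0 x)) • W x) a := by
        have h1 := (hη.differentiable one_ne_zero x).hasFDerivAt.pow 2
        have h2 := (hg.differentiable one_ne_zero (pd u 0 x)).hasDerivAt.comp_hasFDerivAt x
          (hw.differentiable one_ne_zero x).hasFDerivAt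
        have h3 := (h1.mul h2).fderiv
        rw [inner_add_left, inner_smul_left, inner_smul_left, inner_gradient_left, ← hwd]
        refine (congrArg (fun L : E2 →L[ℝ] ℝ => L a) h3).trans ?_
        simp
        ring
      have key := integral_sum_fderiv_mul_fderiv_eq_zero hV heq hφ hφc (ee 0)
      rw [← key]
      refine integral_congr_ae (.of_forall fun x => ?_)
      simp only [hVd, hφd]
      rw [sum_mul_inner_ee (B x (W x))]
      simp only [map_add, map_smul, smul_eq_mul]
      ring
    · have hcs := sq_apply_le_mul_of_nonneg (hBsymm x) (hBnonneg x) (W x) (gradient η x)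
      have hle := hBle x (gradient η x)
      have hnorm : ‖gradient η x‖ = ‖fderiv ℝ η x‖ := by
        rw [← toDual_gradient, LinearIsometryEquiv.norm_map]
      rw [hnorm] at hle
      have hs : 0 < 1 + ‖G x‖ := by positivity
      have hWW := hBnonneg x (W x)
      have hd := hg' (pd u 0 x)
      calc (2 * η x * g (pd u 0 x) * B x (W x) (gradient η x)) ^ 2
          = 4 * η x ^ 2 * (g (pd u 0 x) ^ 2 * B x (W x) (gradient η x) ^ 2) := by ring
        _ ≤ 4 * η x ^ 2 * (c * (1 + ‖G x‖) * deriv g (pd u 0 x) *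
            (B x (W x) (W x) * (Lam / (1 + ‖G x‖) * ‖fderiv ℝ η x‖ ^ 2))) := by
          gcongr
          · exact hcond x
          · exact hcs.trans (by gcongr)
        _ = _ := by field_simp
  have hW0 (x : E2) : W x = 0 := by
    by_contra hne
    exact (mul_pos (hg' (pd u 0 x)) (hBpos x _ hne)).ne' (hQ0 x)
  have hdiv := heq x
  simp only [Fin.sum_univ_two, ← hGdef, hVd] at hdiv
  have h0 : fderiv ℝ G x (ee 0) = 0 := hW0 x
  rw [h0, map_zero, zero_apply, zero_add] at hdiv
  set Z := fderiv ℝ G x (ee 1) with hZ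
  have hZ0 : inner ℝ Z (ee 0) = 0 := by
    rw [hZ, hGdef, inner_fderiv_gradient_comm hu, ← hGdef, h0, inner_zero_left]
  have hZZ : B x Z Z = 0 := by
    rw [← sum_mul_inner_ee (B x Z) Z, Fin.sum_univ_two, hZ0, hdiv]
    simp
  have hZ00 : Z = 0 := by
    by_contra hne
    exact (hBpos x Z hne).ne' hZZ
  ext a : 1
  rw [← sum_smul_ee a, map_sum, Fin.sum_univ_two, map_smul, map_smul, h0, ← hZ, hZ00]
  simp

theorem statement16 (f u : E2 → ℝ)
    (hf : ContDiff ℝ 2 f)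
    (hpos : ∀ p q : E2, q ≠ 0 → 0 < Hess f p q)
    (Lam : ℝ) (hLam : 0 < Lam)
    (hgrow : ∀ p : E2, ‖iteratedFDeriv ℝ 2 f p‖ ≤ Lam / (1 + ‖p‖))
    (ρ : ℝ → ℝ) (hρC1 : ContDiffOn ℝ 1 ρ (Set.Ici 1))
    (hρpos : ∀ t : ℝ, 1 ≤ t → 0 < ρ t)
    (hρ' : ∀ t : ℝ, 1 ≤ t → 0 < derivWithin ρ (Set.Ici 1) t)
    (hρmono : ∀ t : ℝ, 1 ≤ t → derivWithin (fun s => ρ s / Real.sqrt s) (Set.Ici 1) t ≤ 0)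
    (hu : ContDiff ℝ 2 u) (heq : solves f u)
    (c : ℝ)
    (hcond : ∀ x : E2,
      (1 + (pd u 0 x) ^ 2) ^ (-(1:ℝ)/2) * (ρ (1 + (pd u 0 x) ^ 2)) ^ 2 /
          derivWithin ρ (Set.Ici 1) (1 + (pd u 0 x) ^ 2)
        ≤ c * (1 + (pd u 1 x) ^ 2) ^ ((1:ℝ)/2)) :
    ∃ a b c : ℝ, ∀ x : E2, u x = a * x 0 + b * x 1 + c := by
  obtain ⟨g, hg, hg', hgle⟩ := exists_profile hρC1 hρpos hρ'
  refine exists_affine_of_fderiv_gradient_eq_zero hu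
    (fderiv_gradient_eq_zero_of_profile hf hpos hLam hgrow hu heq hg hg' (abs_nonneg c)
      fun x => (hgle _).trans ?_)
  refine mul_le_mul_of_nonneg_right ((hcond x).trans ?_) (hg' _).le
  have hpd : |pd u 1 x| ≤ ‖gradient u x‖ := by
    rw [pd, ← inner_gradient_left]
    simpa [ee] using abs_real_inner_le_norm (gradient u x) (ee 1)
  have hsqrt : √(1 + pd u 1 x ^ 2) ≤ 1 + ‖gradient u x‖ := by
    refine Real.sqrt_le_iff.2 ⟨by positivity, ?_⟩
    nlinarith [sq_abs (pd u 1 x), abs_nonneg (pd u 1 x)]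
  rw [← Real.sqrt_eq_rpow]
  gcongr
  exact le_abs_self c
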